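/- Let S_1, …, S_k be bounded linear operators on H each admitting an A-adjoint, and let n ≥ 1 be an integer. Then ω_A( Σ_{i=1}^k S_i )^{2n} ≤ (k^{2n−1}/2) · ‖ Σ_{i=1}^k ( (S_i^{♯_A} S_i)^{n} + (S_i S_i^{♯_A})^{n} ) ‖_A. -/

import Mathlib

noncomputable section

open ContinuousLinearMap

variable {H : Type*} [NormedAddCommGroup H] [InnerProductSpace ℂ H] [CompleteSpace H]

/-- The semi-inner product induced by the positive operator `A`: `⟨x, y⟩_A := ⟨A x, y⟩`. -/
def innA (A : H →L[ℂ] H) (x y : H) : ℂ := inner ℂ (A x) y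

/-- The seminorm induced by `A`: `‖x‖_A := ⟨x, x⟩_A ^ (1/2)`. -/
def vnormA (A : H →L[ℂ] H) (x : H) : ℝ := Real.sqrt (innA A x x).re

/-- The `A`-operator seminorm: `‖T‖_A := sup {‖T x‖_A : ‖x‖_A = 1}`. -/
def opNormA (A T : H →L[ℂ] H) : ℝ :=
  sSup {c : ℝ | ∃ x : H, vnormA A x = 1 ∧ c = vnormA A (T x)}

/-- The `A`-numerical radius: `ω_A(T) := sup {|⟨T x, x⟩_A| : ‖x‖_A = 1}`. -/
def wA (A T : H →L[ℂ] H) : ℝ :=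
  sSup {c : ℝ | ∃ x : H, vnormA A x = 1 ∧ c = ‖innA A (T x) x‖}

/-- `T` admits an `A`-adjoint: there is a bounded operator `X` with `A X = T* A`. -/
def HasAAdjoint (A T : H →L[ℂ] H) : Prop :=
  ∃ X : H →L[ℂ] H, A ∘L X = adjoint T ∘L A

/-- `X` is the reduced `A`-adjoint `T^{♯_A}` of `T`: it solves `A X = T* A` and its range
is contained in the closure of the range of `A`. -/
def IsReducedAAdjoint (A T X : H →L[ℂ] H) : Prop :=
  (A ∘L X = adjoint T ∘L A) ∧ ∀ y : H, X y ∈ closure (Set.range A)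

/-!
Since `|⟨T x, x⟩_A|²` is at most both `⟨T^♯ T x, x⟩_A` and `⟨T T^♯ x, x⟩_A` for `‖x‖_A = 1`, the
power mean inequality reduces the bound to McCarthy's inequality `⟨P x, x⟩_A ^ n ≤ ⟨P ^ n x, x⟩_A`
for `A`-positive `P`. As each `A P ^ m` is positive, Cauchy-Schwarz for its form shows that the
moments `⟨P ^ m x, x⟩_A` are log-convex in `m`, which gives McCarthy's inequality. Comparing it
with the growth of `‖P ^ m‖` as `m → ∞` also gives `⟨P x, x⟩_A ≤ ‖P‖` (Reid's inequality), so the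
supremum defining the `A`-operator seminorm of an `A`-adjointable operator is finite.
-/

theorem le_of_forall_pow_le_mul_pow {K : Type*} [Field K] [LinearOrder K] [IsStrictOrderedRing K]
    [Archimedean K] {b c C : K} (hc : 0 ≤ c) (h : ∀ m : ℕ, b ^ m ≤ C * c ^ m) : b ≤ c := by
  by_contra! hlt
  rcases hc.eq_or_lt with rfl | hpos
  · exact hlt.not_ge (by simpa using h 1)
  · obtain ⟨m, hm⟩ := pow_unbounded_of_one_lt C ((one_lt_div hpos).2 hlt)
    rw [div_pow, lt_div_iff₀ (pow_pos hpos m)] at hm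
    exact (h m).not_gt hm

section LogConvex

variable {R : Type*} [CommSemiring R] [LinearOrder R] [IsStrictOrderedRing R] {a : ℕ → R}

theorem mul_le_mul_succ_of_logConvex (hnonneg : ∀ m, 0 ≤ a m)
    (hconv : ∀ m, a (m + 1) ^ 2 ≤ a m * a (m + 2)) (m : ℕ) :
    a 1 * a m ≤ a 0 * a (m + 1) := by
  induction m with
  | zero => rw [mul_comm]
  | succ m ih =>
    rcases (hnonneg (m + 1)).eq_or_lt with h0 | hpos
    · rw [← h0, mul_zero]
      exact mul_nonneg (hnonneg 0) (hnonneg (m + 2))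
    · refine le_of_mul_le_mul_right ?_ hpos
      calc a 1 * a (m + 1) * a (m + 1) = a 1 * a (m + 1) ^ 2 := by ring
        _ ≤ a 1 * (a m * a (m + 2)) := mul_le_mul_of_nonneg_left (hconv m) (hnonneg 1)
        _ = a 1 * a m * a (m + 2) := by ring
        _ ≤ a 0 * a (m + 1) * a (m + 2) := mul_le_mul_of_nonneg_right ih (hnonneg (m + 2))
        _ = a 0 * a (m + 2) * a (m + 1) := by ring

theorem pow_mul_le_pow_mul_of_logConvex (hnonneg : ∀ m, 0 ≤ a m)
    (hconv : ∀ m, a (m + 1) ^ 2 ≤ a m * a (m + 2)) (m : ℕ) :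
    a 1 ^ m * a 0 ≤ a 0 ^ m * a m := by
  induction m with
  | zero => simp
  | succ m ih =>
    calc a 1 ^ (m + 1) * a 0 = a 1 * (a 1 ^ m * a 0) := by ring
      _ ≤ a 1 * (a 0 ^ m * a m) := mul_le_mul_of_nonneg_left ih (hnonneg 1)
      _ = a 0 ^ m * (a 1 * a m) := by ring
      _ ≤ a 0 ^ m * (a 0 * a (m + 1)) := mul_le_mul_of_nonneg_left
          (mul_le_mul_succ_of_logConvex hnonneg hconv m) (pow_nonneg (hnonneg 0) m)
      _ = a 0 ^ (m + 1) * a (m + 1) := by ring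

end LogConvex

theorem sSup_pow_le {s : Set ℝ} {M : ℝ} {m : ℕ} (hs : ∀ c ∈ s, 0 ≤ c) (hm : m ≠ 0) (hM : 0 ≤ M)
    (h : ∀ c ∈ s, c ^ m ≤ M) : sSup s ^ m ≤ M := by
  rw [sSup_eq_iSup', Real.iSup_pow_of_ne_zero (fun c : s => hs c c.2) hm]
  exact Real.iSup_le (fun c : s => h c c.2) hM

section SemiInnerProduct

variable {E : Type*} [NormedAddCommGroup E] [InnerProductSpace ℂ E] {A : E →L[ℂ] E}

theorem innA_add_left (A : E →L[ℂ] E) (x y z : E) :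
    innA A (x + y) z = innA A x z + innA A y z := by
  simp only [innA, map_add, inner_add_left]

theorem innA_sum_left {ι : Type*} (A : E →L[ℂ] E) (s : Finset ι) (x : ι → E) (y : E) :
    innA A (∑ i ∈ s, x i) y = ∑ i ∈ s, innA A (x i) y := by
  simp only [innA, map_sum, sum_inner]

theorem norm_innA_comm (hA : (A : E →ₗ[ℂ] E).IsSymmetric) (x y : E) :
    ‖innA A x y‖ = ‖innA A y x‖ := by
  rw [innA, innA, ← norm_inner_symm]
  exact congrArg norm (hA y x).symm

theorem vnormA_sq (hA : A.IsPositive) (x : E) : vnormA A x ^ 2 = (innA A x x).re :=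
  Real.sq_sqrt (hA.re_inner_nonneg_left x)

theorem re_innA_self_eq_one (hA : A.IsPositive) {x : E} (hx : vnormA A x = 1) :
    (innA A x x).re = 1 := by
  rw [← vnormA_sq hA, hx, one_pow]

theorem wA_pow_le {T : E →L[ℂ] E} {m : ℕ} {M : ℝ} (hm : m ≠ 0) (hM : 0 ≤ M)
    (h : ∀ x, vnormA A x = 1 → ‖innA A (T x) x‖ ^ m ≤ M) : wA A T ^ m ≤ M := by
  refine sSup_pow_le ?_ hm hM ?_
  · rintro _ ⟨x, -, rfl⟩
    exact norm_nonneg _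
  · rintro _ ⟨x, hx, rfl⟩
    exact h x hx

theorem opNormA_nonneg (A T : E →L[ℂ] E) : 0 ≤ opNormA A T := by
  refine Real.sSup_nonneg ?_
  rintro _ ⟨x, -, rfl⟩
  exact Real.sqrt_nonneg _

/-- `P` is `A`-positive: the sesquilinear form `⟨P x, y⟩_A` is positive semidefinite. -/
def IsAPositive (A P : E →L[ℂ] E) : Prop :=
  (A * P).IsPositive

theorem IsAPositive.add {P Q : E →L[ℂ] E} (hP : IsAPositive A P) (hQ : IsAPositive A Q) :
    IsAPositive A (P + Q) := by
  rw [IsAPositive, mul_add]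
  exact IsPositive.add hP hQ

theorem IsAPositive.sum {ι : Type*} {s : Finset ι} {P : ι → E →L[ℂ] E}
    (hP : ∀ i ∈ s, IsAPositive A (P i)) : IsAPositive A (∑ i ∈ s, P i) := by
  rw [IsAPositive, Finset.mul_sum]
  exact isPositive_sum s hP

end SemiInnerProduct

section CauchySchwarz

variable {A : H →L[ℂ] H}

theorem innA_eq_inner_sqrt (hA : A.IsPositive) (x y : H) :
    innA A x y = inner ℂ (CFC.sqrt A x) (CFC.sqrt A y) := by
  have hA' : 0 ≤ A := (nonneg_iff_isPositive A).2 hA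
  have hsqrt : (CFC.sqrt A).IsPositive := (nonneg_iff_isPositive _).1 (CFC.sqrt_nonneg A)
  rw [← hsqrt.inner_left_eq_inner_right, ← mul_apply_eq_comp, CFC.sqrt_mul_sqrt_self A, innA]

theorem vnormA_eq_norm_sqrt (hA : A.IsPositive) (x : H) : vnormA A x = ‖CFC.sqrt A x‖ := by
  rw [vnormA, innA_eq_inner_sqrt hA, norm_eq_sqrt_re_inner (𝕜 := ℂ), RCLike.re_eq_complex_re]

theorem norm_innA_le (hA : A.IsPositive) (x y : H) :
    ‖innA A x y‖ ≤ vnormA A x * vnormA A y := by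
  rw [innA_eq_inner_sqrt hA, vnormA_eq_norm_sqrt hA, vnormA_eq_norm_sqrt hA]
  exact norm_inner_le_norm _ _

theorem norm_innA_le_vnormA_left (hA : A.IsPositive) (y : H) {x : H} (hx : vnormA A x = 1) :
    ‖innA A y x‖ ≤ vnormA A y := by
  simpa only [hx, mul_one] using norm_innA_le hA y x

end CauchySchwarz

/-- `X` is an `A`-adjoint of `T`, i.e. `⟨X x, y⟩_A = ⟨x, T y⟩_A`. In contrast to
`IsReducedAAdjoint`, the range of `X` is not restricted, so that `X` need not be unique
and, for self-adjoint `A`, `T` is in turn an `A`-adjoint of `X`. -/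
def IsAAdjoint (A T X : H →L[ℂ] H) : Prop :=
  A * X = adjoint T * A

section AAdjoint

variable {A T X : H →L[ℂ] H}

theorem IsAAdjoint.innA_apply_left (h : IsAAdjoint A T X) (x y : H) :
    innA A (X x) y = innA A x (T y) := by
  rw [innA, innA, ← mul_apply_eq_comp, h, mul_apply_eq_comp, adjoint_inner_left]

theorem IsAAdjoint.symm (hA : IsSelfAdjoint A) (h : IsAAdjoint A T X) : IsAAdjoint A X T := by
  have hstar := congrArg star h
  rw [star_mul, star_mul, hA.star_eq, star_eq_adjoint, star_eq_adjoint,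
    adjoint_adjoint] at hstar
  exact hstar.symm

theorem IsAAdjoint.isAPositive_mul (hA : A.IsPositive) (h : IsAAdjoint A T X) :
    IsAPositive A (X * T) := by
  rw [IsAPositive, ← mul_assoc, h]
  exact hA.adjoint_conj T

theorem IsAAdjoint.vnormA_apply_sq (hA : A.IsPositive) (h : IsAAdjoint A T X) (x : H) :
    vnormA A (T x) ^ 2 = (innA A ((X * T) x) x).re := by
  rw [vnormA_sq hA, mul_apply_eq_comp, h.innA_apply_left]

theorem IsAAdjoint.norm_innA_apply_self (hA : IsSelfAdjoint A) (h : IsAAdjoint A T X) (x : H) :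
    ‖innA A (X x) x‖ = ‖innA A (T x) x‖ := by
  rw [h.innA_apply_left, norm_innA_comm hA.isSymmetric]

end AAdjoint

namespace IsAPositive

variable {A P : H →L[ℂ] H}

theorem isAAdjoint (hA : IsSelfAdjoint A) (hP : IsAPositive A P) : IsAAdjoint A P P := by
  have h := hP.isSelfAdjoint.star_eq
  rw [star_mul, hA.star_eq, star_eq_adjoint] at h
  exact h.symm

theorem pow (hA : A.IsPositive) (hP : IsAPositive A P) (m : ℕ) : IsAPositive A (P ^ m) := by
  induction m using Nat.twoStepInduction with
  | zero => simpa [IsAPositive] using hA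
  | one => simpa using hP
  | more m ih _ =>
    have hconj : A * P ^ (m + 2) = adjoint P * (A * P ^ m) * P := by
      rw [← mul_assoc, ← hP.isAAdjoint hA.isSelfAdjoint, pow_succ, pow_succ',
        mul_assoc, mul_assoc, mul_assoc]
    rw [IsAPositive, hconj]
    exact IsPositive.adjoint_conj ih P

theorem re_innA_pow_nonneg (hA : A.IsPositive) (hP : IsAPositive A P) (m : ℕ) (x : H) :
    0 ≤ (innA A ((P ^ m) x) x).re :=
  (hP.pow hA m).re_inner_nonneg_left x

theorem re_innA_pow_succ_sq_le (hA : A.IsPositive) (hP : IsAPositive A P) (m : ℕ) (x : H) :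
    (innA A ((P ^ (m + 1)) x) x).re ^ 2 ≤
      (innA A ((P ^ m) x) x).re * (innA A ((P ^ (m + 2)) x) x).re := by
  have hform : ∀ y, innA (A * P ^ m) y (P x) = innA A ((P ^ (m + 1)) y) x := fun y => by
    rw [pow_succ', mul_apply_eq_comp, (hP.isAAdjoint hA.isSelfAdjoint).innA_apply_left]
    rfl
  have hB : (A * P ^ m).IsPositive := hP.pow hA m
  calc (innA A ((P ^ (m + 1)) x) x).re ^ 2
      ≤ ‖innA (A * P ^ m) x (P x)‖ ^ 2 := by
        rw [hform]
        exact sq_le_sq.2 ((Complex.abs_re_le_norm _).trans (le_abs_self _))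
    _ ≤ (vnormA (A * P ^ m) x * vnormA (A * P ^ m) (P x)) ^ 2 := by
        gcongr
        exact norm_innA_le hB x (P x)
    _ = (innA A ((P ^ m) x) x).re * (innA A ((P ^ (m + 2)) x) x).re := by
        rw [mul_pow, vnormA_sq hB, vnormA_sq hB, hform, ← mul_apply_eq_comp, ← pow_succ]
        rfl

theorem pow_re_innA_le_re_innA_pow (hA : A.IsPositive) (hP : IsAPositive A P) {x : H}
    (hx : vnormA A x = 1) (m : ℕ) :
    (innA A (P x) x).re ^ m ≤ (innA A ((P ^ m) x) x).re := by
  simpa [re_innA_self_eq_one hA hx] using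
    pow_mul_le_pow_mul_of_logConvex (a := fun m => (innA A ((P ^ m) x) x).re)
      (hP.re_innA_pow_nonneg hA · x) (hP.re_innA_pow_succ_sq_le hA · x) m

theorem re_innA_le_norm (hA : A.IsPositive) (hP : IsAPositive A P) {x : H}
    (hx : vnormA A x = 1) : (innA A (P x) x).re ≤ ‖P‖ := by
  have : Nontrivial H := ⟨x, 0, by rintro rfl; simp [vnormA, innA] at hx⟩
  refine le_of_forall_pow_le_mul_pow (C := ‖A‖ * ‖x‖ * ‖x‖) (norm_nonneg P) fun m => ?_
  calc (innA A (P x) x).re ^ m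
      ≤ (innA A ((P ^ m) x) x).re := hP.pow_re_innA_le_re_innA_pow hA hx m
    _ ≤ ‖innA A ((P ^ m) x) x‖ := Complex.re_le_norm _
    _ ≤ ‖A ((P ^ m) x)‖ * ‖x‖ := norm_inner_le_norm _ _
    _ ≤ ‖A‖ * (‖P‖ ^ m * ‖x‖) * ‖x‖ := by
        gcongr
        exact A.le_opNorm_of_le ((P ^ m).le_of_opNorm_le (norm_pow_le P m) x)
    _ = ‖A‖ * ‖x‖ * ‖x‖ * ‖P‖ ^ m := by ring

end IsAPositive

namespace IsAAdjoint

variable {A T X : H →L[ℂ] H} {x : H}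

theorem vnormA_apply_le (hA : A.IsPositive) (h : IsAAdjoint A T X) (hx : vnormA A x = 1) :
    vnormA A (T x) ≤ √‖X * T‖ := by
  refine Real.le_sqrt_of_sq_le ?_
  rw [h.vnormA_apply_sq hA]
  exact (h.isAPositive_mul hA).re_innA_le_norm hA hx

theorem vnormA_apply_le_opNormA (hA : A.IsPositive) (h : IsAAdjoint A T X)
    (hx : vnormA A x = 1) : vnormA A (T x) ≤ opNormA A T := by
  refine le_csSup ⟨√‖X * T‖, ?_⟩ ⟨x, hx, rfl⟩
  rintro _ ⟨y, hy, rfl⟩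
  exact h.vnormA_apply_le hA hy

theorem norm_innA_apply_le_opNormA (hA : A.IsPositive) (h : IsAAdjoint A T X)
    (hx : vnormA A x = 1) : ‖innA A (T x) x‖ ≤ opNormA A T :=
  (norm_innA_le_vnormA_left hA (T x) hx).trans (h.vnormA_apply_le_opNormA hA hx)

theorem norm_innA_pow_le (hA : A.IsPositive) (h : IsAAdjoint A T X) (hx : vnormA A x = 1)
    (n : ℕ) : ‖innA A (T x) x‖ ^ (2 * n) ≤ (innA A (((X * T) ^ n) x) x).re := by
  calc ‖innA A (T x) x‖ ^ (2 * n) ≤ vnormA A (T x) ^ (2 * n) := by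
        gcongr
        exact norm_innA_le_vnormA_left hA (T x) hx
    _ = (innA A ((X * T) x) x).re ^ n := by rw [pow_mul, h.vnormA_apply_sq hA]
    _ ≤ (innA A (((X * T) ^ n) x) x).re :=
        (h.isAPositive_mul hA).pow_re_innA_le_re_innA_pow hA hx n

theorem norm_innA_pow_le_half (hA : A.IsPositive) (h : IsAAdjoint A T X) (hx : vnormA A x = 1)
    (n : ℕ) :
    ‖innA A (T x) x‖ ^ (2 * n) ≤ (innA A (((X * T) ^ n + (T * X) ^ n) x) x).re / 2 := by
  have hleft := h.norm_innA_pow_le hA hx n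
  have hright := (h.symm hA.isSelfAdjoint).norm_innA_pow_le hA hx n
  rw [h.norm_innA_apply_self hA.isSelfAdjoint] at hright
  rw [add_apply, innA_add_left, Complex.add_re]
  linarith

theorem isAPositive_pow_add_pow (hA : A.IsPositive) (h : IsAAdjoint A T X) (n : ℕ) :
    IsAPositive A ((X * T) ^ n + (T * X) ^ n) :=
  ((h.isAPositive_mul hA).pow hA n).add (((h.symm hA.isSelfAdjoint).isAPositive_mul hA).pow hA n)

end IsAAdjoint

theorem norm_innA_sum_pow_le {ι : Type*} {s : Finset ι} {A : H →L[ℂ] H} {T X : ι → H →L[ℂ] H}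
    (hA : A.IsPositive) (h : ∀ i ∈ s, IsAAdjoint A (T i) (X i)) {n : ℕ} (hn : n ≠ 0) {x : H}
    (hx : vnormA A x = 1) :
    ‖innA A ((∑ i ∈ s, T i) x) x‖ ^ (2 * n) ≤ ((s.card : ℝ) ^ (2 * n - 1) / 2) *
      (innA A ((∑ i ∈ s, ((X i * T i) ^ n + (T i * X i) ^ n)) x) x).re := by
  calc ‖innA A ((∑ i ∈ s, T i) x) x‖ ^ (2 * n)
      ≤ (∑ i ∈ s, ‖innA A (T i x) x‖) ^ (2 * n) := by
        rw [sum_apply, innA_sum_left]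
        gcongr
        exact norm_sum_le _ _
    _ ≤ (s.card : ℝ) ^ (2 * n - 1) * ∑ i ∈ s, ‖innA A (T i x) x‖ ^ (2 * n) := by
        have hmean := pow_sum_le_card_mul_sum_pow (s := s) (f := fun i => ‖innA A (T i x) x‖)
          (fun i _ => norm_nonneg _) (2 * n - 1)
        rwa [Nat.sub_add_cancel (by lia)] at hmean
    _ ≤ (s.card : ℝ) ^ (2 * n - 1) *
          ∑ i ∈ s, (innA A (((X i * T i) ^ n + (T i * X i) ^ n) x) x).re / 2 := by
        gcongr with i hi
        exact (h i hi).norm_innA_pow_le_half hA hx n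
    _ = _ := by
        rw [sum_apply, innA_sum_left, Complex.re_sum, ← Finset.sum_div]
        ring

theorem stmt14_general {ι : Type*} {s : Finset ι} {A : H →L[ℂ] H} {T X : ι → H →L[ℂ] H}
    (hA : A.IsPositive) (h : ∀ i ∈ s, IsAAdjoint A (T i) (X i)) {n : ℕ} (hn : n ≠ 0) :
    wA A (∑ i ∈ s, T i) ^ (2 * n) ≤ ((s.card : ℝ) ^ (2 * n - 1) / 2) *
      opNormA A (∑ i ∈ s, ((X i * T i) ^ n + (T i * X i) ^ n)) := by
  have hpos : IsAPositive A (∑ i ∈ s, ((X i * T i) ^ n + (T i * X i) ^ n)) :=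
    .sum fun i hi => (h i hi).isAPositive_pow_add_pow hA n
  refine wA_pow_le (by lia) (mul_nonneg (by positivity) (opNormA_nonneg A _)) fun x hx => ?_
  refine (norm_innA_sum_pow_le hA h hn hx).trans ?_
  gcongr
  exact (Complex.re_le_norm _).trans
    ((hpos.isAAdjoint hA.isSelfAdjoint).norm_innA_apply_le_opNormA hA hx)

theorem stmt14 (A : H →L[ℂ] H) (hA : A.IsPositive) (hA0 : A ≠ 0)
    (k : ℕ) (hk : 1 ≤ k) (n : ℕ) (hn : 1 ≤ n)
    (S Ssharp : Fin k → (H →L[ℂ] H))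
    (hS : ∀ i, IsReducedAAdjoint A (S i) (Ssharp i)) :
    wA A (∑ i, S i) ^ (2 * n) ≤
      ((k : ℝ) ^ (2 * n - 1) / 2) *
        opNormA A (∑ i, ((Ssharp i * S i) ^ n + (S i * Ssharp i) ^ n)) := by
  simpa only [Finset.card_fin] using
    stmt14_general (s := Finset.univ) hA (fun i _ => (hS i).1) (Nat.one_le_iff_ne_zero.1 hn)
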